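/- A Banach space X is reflexive if and only if X has property (E), i.e. if and only if for every closed linear subspace Y of X and every x ∈ X there exists at least one best approximation y₀ ∈ Y, meaning ‖x − y₀‖ = ρ(x, Y). -/

import Mathlib

open Metric Filter

/-!
Reflexivity gives best approximations by duality: by Hahn–Banach, evaluation at `x` on the
annihilator of `Y` extends to a functional on the dual of norm at most `ρ(x, Y)`; by reflexivity
this extension is evaluation at some `z`, and then `x - z` is a best approximation to `x` from `Y`.

The converse is a theorem of James. If `X` is not reflexive, a functional `F` on the dual far from
`X`, together with Helly's and Goldstine's theorems, yields functionals `f n` and vectors `x n` in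
the unit balls with `f n (x m) = 0` for `m < n` and `re (f m (x n)) > θ` for `m ≤ n`. On the closed
span `Z` of the `x n`, the `f n` tend to `0` pointwise although their convex hull stays away
from `0`. Greedily minimizing norms along a series `∑ 2⁻⁽ᵏ⁺¹⁾ gₖ`, with `gₖ` in the closed convex
hull of `f k, f (k + 1), …`, produces a functional on `Z` that does not attain its norm; hence its
kernel, a closed subspace of `X`, does not admit best approximations.
-/

section Proximinal

variable {α β : Type*} [PseudoMetricSpace α] [PseudoMetricSpace β]

/-- A set is *proximinal* if every point of the ambient space has a best approximation in it.
Property (E) says that all closed subspaces are proximinal. -/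
def IsProximinal (s : Set α) : Prop :=
  ∀ x, ∃ y ∈ s, dist x y = infDist x s

theorem IsProximinal.of_isometry_image {φ : α → β} (hφ : Isometry φ) {s : Set α}
    (h : IsProximinal (φ '' s)) : IsProximinal s := by
  intro x
  obtain ⟨_, ⟨y, hy, rfl⟩, hxy⟩ := h (φ x)
  exact ⟨y, hy, by rwa [hφ.dist_eq, infDist_image hφ] at hxy⟩

end Proximinal

section Duality

variable {𝕜 E : Type*} [RCLike 𝕜] [NormedAddCommGroup E] [NormedSpace 𝕜 E]

open NormedSpace StrongDual

theorem exists_norm_eq_one_re_apply_smul_eq_norm (f : StrongDual 𝕜 E) (x : E) :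
    ∃ c : 𝕜, ‖c‖ = 1 ∧ RCLike.re (f (c • x)) = ‖f x‖ := by
  obtain ⟨c, hc, hcx⟩ := RCLike.exists_norm_eq_mul_self (f x)
  exact ⟨c, hc, by rw [map_smul, smul_eq_mul, ← hcx, RCLike.ofReal_re]⟩

theorem exists_extension_norm_le (M : Submodule 𝕜 E) (φ : StrongDual 𝕜 E) {c : ℝ} (hc : 0 ≤ c)
    (h : ∀ m ∈ M, ‖φ m‖ ≤ c * ‖m‖) :
    ∃ ψ : StrongDual 𝕜 E, ‖ψ‖ ≤ c ∧ ∀ m ∈ M, ψ m = φ m := by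
  obtain ⟨ψ, hψ, hnorm⟩ := exists_extension_norm_eq M (φ.comp M.subtypeL)
  refine ⟨ψ, ?_, fun m hm => hψ ⟨m, hm⟩⟩
  rw [hnorm]
  exact ContinuousLinearMap.opNorm_le_bound _ hc fun m => h m m.2

theorem mem_of_forall_mem_polarSubmodule {Y : Submodule 𝕜 E} (hY : IsClosed (Y : Set E)) {x : E}
    (h : ∀ f ∈ polarSubmodule 𝕜 Y, f x = 0) : x ∈ Y := by
  rw [← Submodule.Quotient.mk_eq_zero]
  refine SeparatingDual.eq_zero_of_forall_dual_eq_zero (R := 𝕜) fun g => h (g.comp Y.mkQL) ?_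
  rw [mem_polarSubmodule]
  intro y hy
  simp [(Submodule.Quotient.mk_eq_zero Y).2 hy]

theorem norm_apply_le_infDist_mul_norm {Y : Submodule 𝕜 E} {f : StrongDual 𝕜 E}
    (hf : f ∈ polarSubmodule 𝕜 Y) (x : E) : ‖f x‖ ≤ infDist x (Y : Set E) * ‖f‖ := by
  rcases eq_or_ne f 0 with rfl | hf0
  · simp
  have hpos : 0 < ‖f‖ := norm_pos_iff.2 hf0
  rw [← div_le_iff₀ hpos]
  refine (le_infDist ⟨0, Y.zero_mem⟩).2 fun {y} hy => ?_
  rw [div_le_iff₀' hpos, dist_eq_norm]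
  simpa [(mem_polarSubmodule 𝕜 Y f).1 hf y hy] using f.le_opNorm (x - y)

theorem isProximinal_of_surjective_inclusionInDoubleDual
    (hE : Function.Surjective (inclusionInDoubleDual 𝕜 E)) {Y : Submodule 𝕜 E}
    (hY : IsClosed (Y : Set E)) : IsProximinal (Y : Set E) := by
  intro x
  obtain ⟨G, hG, hGx⟩ := exists_extension_norm_le (polarSubmodule 𝕜 Y)
    (inclusionInDoubleDual 𝕜 E x) infDist_nonneg fun f hf => norm_apply_le_infDist_mul_norm hf x
  obtain ⟨z, rfl⟩ := hE G
  have hz : ‖z‖ ≤ infDist x (Y : Set E) := by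
    rwa [← (inclusionInDoubleDualLi 𝕜 (E := E)).norm_map z]
  have hmem : x - z ∈ Y := mem_of_forall_mem_polarSubmodule hY fun f hf => by
    have hfz : f z = f x := hGx f hf
    rw [map_sub, hfz, sub_self]
  exact ⟨x - z, hmem, le_antisymm (by simpa [dist_eq_norm] using hz) (infDist_le_dist_of_mem hmem)⟩

theorem IsProximinal.exists_norm_apply_eq_norm {f : StrongDual 𝕜 E}
    (h : IsProximinal (f.ker : Set E)) : ∃ x, ‖x‖ ≤ 1 ∧ ‖f x‖ = ‖f‖ := by
  rcases eq_or_ne f 0 with rfl | hf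
  · exact ⟨0, by simp⟩
  obtain ⟨w, hw⟩ := DFunLike.ne_iff.1 hf
  obtain ⟨y, hy, hwy⟩ := h w
  replace hy : f y = 0 := hy
  set v := w - y with hv
  have hfv : f v ≠ 0 := by simpa [hv, hy] using hw
  have hv0 : 0 < ‖v‖ := norm_pos_iff.2 fun h0 => hfv (by rw [h0, map_zero])
  -- `v` is a shortest vector of the hyperplane `f = f v`, which contains `(f v / f u) • u`.
  have hmin : ∀ u, f u = f v → ‖v‖ ≤ ‖u‖ := by
    intro u hu
    have hmem : w - u ∈ (f.ker : Set E) := by simp [hu, hv, hy]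
    have := infDist_le_dist_of_mem (x := w) hmem
    rwa [← hwy, dist_eq_norm, dist_eq_norm, sub_sub_cancel] at this
  have hbound : ‖f‖ ≤ ‖f v‖ / ‖v‖ := by
    refine ContinuousLinearMap.opNorm_le_bound _ (by positivity) fun u => ?_
    rcases eq_or_ne (f u) 0 with hu | hu
    · rw [hu, norm_zero]
      positivity
    have := hmin ((f v / f u) • u) (by rw [map_smul, smul_eq_mul, div_mul_cancel₀ _ hu])
    rw [norm_smul, norm_div, div_mul_eq_mul_div, le_div_iff₀ (norm_pos_iff.2 hu)] at this
    rw [div_mul_eq_mul_div, le_div_iff₀ hv0]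
    linarith
  refine ⟨((‖v‖ : 𝕜)⁻¹) • v, (norm_smul_inv_norm (norm_pos_iff.1 hv0)).le, le_antisymm ?_ ?_⟩
  · exact f.unit_le_opNorm _ (norm_smul_inv_norm (norm_pos_iff.1 hv0)).le
  · simpa [inv_mul_eq_div] using hbound

end Duality

section JamesSystem

variable {𝕜 E : Type*} [RCLike 𝕜] [NormedAddCommGroup E] [NormedSpace 𝕜 E]

open NormedSpace Topology

theorem exists_norm_eq_one_forall_le_norm_sub_apply {V : Type*} [NormedAddCommGroup V]
    [NormedSpace 𝕜 V] [CompleteSpace E] (T : E →L[𝕜] V) (hT : Isometry T)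
    (hns : ¬ Function.Surjective T) {r : ℝ} (hr : r < 1) : ∃ v, ‖v‖ = 1 ∧ ∀ x, r ≤ ‖v - T x‖ := by
  have hclosed : IsClosed (T.range : Set V) := hT.isClosedEmbedding.isClosed_range
  obtain ⟨v₀, hv₀⟩ := not_forall.1 hns
  obtain ⟨v, -, hv, hdist⟩ := riesz_lemma_of_lt_one hclosed ⟨v₀, hv₀⟩ hr
  exact ⟨v, hv, fun x => hdist _ ⟨x, rfl⟩⟩

theorem exists_norm_sub_inclusionInDoubleDual_le {F : StrongDual 𝕜 (StrongDual 𝕜 E)}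
    (s : Finset E) {θ : ℝ} (hθ : 0 ≤ θ)
    (hF : ∀ f : StrongDual 𝕜 E, (∀ x ∈ s, f x = 0) → ‖F f‖ ≤ θ * ‖f‖) :
    ∃ x, ‖F - inclusionInDoubleDual 𝕜 E x‖ ≤ θ := by
  let eval : s → Module.Dual 𝕜 (StrongDual 𝕜 E) :=
    fun x => (inclusionInDoubleDual 𝕜 E x).toLinearMap
  have hmem : ∀ f, f ∈ ⨅ x, (eval x).ker ↔ ∀ x ∈ s, f x = 0 := by
    simp [eval, Submodule.mem_iInf]
  obtain ⟨G, hG, hGF⟩ := exists_extension_norm_le (⨅ x, (eval x).ker) F hθ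
    fun f hf => hF f ((hmem f).1 hf)
  have hspan : (F - G).toLinearMap ∈ Submodule.span 𝕜 (Set.range eval) :=
    mem_span_of_iInf_ker_le_ker fun f hf => by simp [hGF f hf]
  obtain ⟨c, hc⟩ := (Submodule.mem_span_range_iff_exists_fun 𝕜).1 hspan
  have hx : inclusionInDoubleDual 𝕜 E (∑ x, c x • (x : E)) = F - G := by
    ext f
    simpa [eval] using congr($hc f)
  have hFG : F - (F - G) = G := sub_sub_cancel F G
  exact ⟨_, by rwa [hx, hFG]⟩

theorem exists_norm_le_one_forall_apply_eq_zero_lt_re_apply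
    {F : StrongDual 𝕜 (StrongDual 𝕜 E)} {θ : ℝ} (hθ : 0 ≤ θ)
    (hF : ∀ x, θ < ‖F - inclusionInDoubleDual 𝕜 E x‖) (s : Finset E) :
    ∃ f : StrongDual 𝕜 E, ‖f‖ ≤ 1 ∧ (∀ x ∈ s, f x = 0) ∧ θ < RCLike.re (F f) := by
  obtain ⟨f, hfs, hlt⟩ : ∃ f : StrongDual 𝕜 E, (∀ x ∈ s, f x = 0) ∧ θ * ‖f‖ < ‖F f‖ := by
    by_contra! hle
    obtain ⟨x, hx⟩ := exists_norm_sub_inclusionInDoubleDual_le s hθ hle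
    exact (hF x).not_ge hx
  have hf : f ≠ 0 := by
    rintro rfl
    simp at hlt
  set g : StrongDual 𝕜 E := (‖f‖ : 𝕜)⁻¹ • f with hg
  have hgnorm : ‖g‖ = 1 := norm_smul_inv_norm hf
  have hFg : θ < ‖F g‖ := by
    rw [hg, map_smul, norm_smul, norm_inv, RCLike.norm_ofReal, abs_norm, inv_mul_eq_div]
    exact (lt_div_iff₀ (norm_pos_iff.2 hf)).2 hlt
  obtain ⟨c, hc, hre⟩ := exists_norm_eq_one_re_apply_smul_eq_norm F g
  refine ⟨c • g, by rw [norm_smul, hc, hgnorm, one_mul], fun x hx => ?_, hre ▸ hFg⟩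
  simp [hg, hfs x hx]

/-- **Goldstine's theorem**, tested against finitely many functionals. -/
theorem apply_mem_closure_image_closedBall {ι : Type*} [Finite ι]
    {F : StrongDual 𝕜 (StrongDual 𝕜 E)} (hF : ‖F‖ ≤ 1) (f : ι → StrongDual 𝕜 E) :
    (fun i => F (f i)) ∈ closure ((fun x i => f i x) '' closedBall (0 : E) 1) := by
  classical
  have := Fintype.ofFinite ι
  let := NormedSpace.restrictScalars ℝ 𝕜 E
  let T : E →L[𝕜] (ι → 𝕜) := ContinuousLinearMap.pi f
  by_contra hn
  obtain ⟨φ, u, hball, hu⟩ := RCLike.geometric_hahn_banach_closed_point (𝕜 := 𝕜)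
    ((convex_closedBall (0 : E) 1).linear_image (T.restrictScalars ℝ).toLinearMap).closure
    isClosed_closure hn
  let g : StrongDual 𝕜 E := φ.comp T
  have hg_re : ∀ x, ‖x‖ ≤ 1 → RCLike.re (g x) ≤ u := fun x hx =>
    (hball _ (subset_closure ⟨x, by simpa using hx, rfl⟩)).le
  have hg : ‖g‖ ≤ u := by
    refine g.opNorm_le_of_unit_norm (by simpa using hg_re 0 (by simp)) fun x hx => ?_
    obtain ⟨c, hc, hre⟩ := exists_norm_eq_one_re_apply_smul_eq_norm g x
    exact hre ▸ hg_re _ (by rw [norm_smul, hc, hx, one_mul])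
  obtain ⟨a, ha⟩ : ∃ a : ι → 𝕜, ∀ q, φ q = ∑ i, q i * a i :=
    ⟨_, φ.toLinearMap.pi_apply_eq_sum_univ⟩
  have hFg : F g = φ fun i => F (f i) := by
    have : g = ∑ i, a i • f i := by
      ext x
      simp [g, T, ha fun i => f i x, mul_comm]
    rw [this, ha fun i => F (f i), map_sum]
    simp [mul_comm]
  refine hu.not_ge ?_
  calc RCLike.re (φ fun i => F (f i)) ≤ ‖F g‖ := hFg ▸ RCLike.re_le_norm _
    _ ≤ 1 * ‖g‖ := F.le_of_opNorm_le hF g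
    _ ≤ u := by rwa [one_mul]

theorem exists_norm_le_one_forall_lt_re_apply {F : StrongDual 𝕜 (StrongDual 𝕜 E)} (hF : ‖F‖ ≤ 1)
    {θ : ℝ} {s : Finset (StrongDual 𝕜 E)} (hs : ∀ f ∈ s, θ < RCLike.re (F f)) :
    ∃ x : E, ‖x‖ ≤ 1 ∧ ∀ f ∈ s, θ < RCLike.re (f x) := by
  have hopen : IsOpen {q : s → 𝕜 | ∀ f, θ < RCLike.re (q f)} := by
    simp only [Set.ofPred_forall]
    exact isOpen_iInter_of_finite fun f =>
      isOpen_lt continuous_const (RCLike.continuous_re.comp (continuous_apply f))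
  obtain ⟨_, hq, x, hx, rfl⟩ := mem_closure_iff.1
    (apply_mem_closure_image_closedBall hF fun f : s => (f : StrongDual 𝕜 E)) _ hopen
    fun f => hs f f.2
  exact ⟨x, by simpa using hx, fun f hf => hq ⟨f, hf⟩⟩

/-- A *James system* with constant `θ` is a sequence of functionals and a sequence of vectors in
the unit balls whose matrix `f n (x m)` vanishes for `m < n` and has real part above `θ` for
`n ≤ m`. For `0 ≤ θ < 1` it witnesses that a Banach space is not reflexive. -/
structure IsJamesSystem (θ : ℝ) (f : ℕ → StrongDual 𝕜 E) (x : ℕ → E) : Prop where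
  norm_functional_le : ∀ n, ‖f n‖ ≤ 1
  norm_vector_le : ∀ n, ‖x n‖ ≤ 1
  apply_eq_zero : ∀ ⦃m n⦄, m < n → f n (x m) = 0
  lt_re_apply : ∀ ⦃m n⦄, m ≤ n → θ < RCLike.re (f m (x n))

theorem exists_isJamesSystem [CompleteSpace E]
    (hE : ¬ Function.Surjective (inclusionInDoubleDual 𝕜 E)) {θ : ℝ} (hθ₀ : 0 ≤ θ) (hθ₁ : θ < 1) :
    ∃ (f : ℕ → StrongDual 𝕜 E) (x : ℕ → E), IsJamesSystem θ f x := by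
  classical
  obtain ⟨r, hθr, hr⟩ := exists_between hθ₁
  have hisom : Isometry (inclusionInDoubleDual 𝕜 E) :=
    (inclusionInDoubleDualLi 𝕜 (E := E)).isometry
  have hriesz := exists_norm_eq_one_forall_le_norm_sub_apply (𝕜 := 𝕜)
    (V := StrongDual 𝕜 (StrongDual 𝕜 E)) (inclusionInDoubleDual 𝕜 E)
  obtain ⟨F, hF, hdist⟩ := hriesz hisom hE hr
  obtain ⟨p, hp, hpp⟩ := exists_seq_of_forall_finset_exists
    (fun p : StrongDual 𝕜 E × E =>
      (‖p.1‖ ≤ 1 ∧ θ < RCLike.re (F p.1)) ∧ ‖p.2‖ ≤ 1 ∧ θ < RCLike.re (p.1 p.2))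
    (fun p q => q.1 p.2 = 0 ∧ θ < RCLike.re (p.1 q.2)) fun s hs => by
      obtain ⟨f, hf, hfs, hFf⟩ := exists_norm_le_one_forall_apply_eq_zero_lt_re_apply hθ₀
        (fun x => hθr.trans_le (hdist x)) (s.image Prod.snd)
      have hF_lt : ∀ g ∈ insert f (s.image Prod.fst), θ < RCLike.re (F g) := by
        simp only [Finset.forall_mem_insert, Finset.forall_mem_image]
        exact ⟨hFf, fun p hp => (hs p hp).1.2⟩
      obtain ⟨x, hx, hxs⟩ := exists_norm_le_one_forall_lt_re_apply hF.le hF_lt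
      simp only [Finset.forall_mem_insert, Finset.forall_mem_image] at hfs hxs
      exact ⟨(f, x), ⟨⟨hf, hFf⟩, hx, hxs.1⟩, fun p hp => ⟨hfs hp, hxs.2 hp⟩⟩
  refine ⟨fun n => (p n).1, fun n => (p n).2, fun n => (hp n).1.1, fun n => (hp n).2.1,
    fun m n hmn => (hpp m n hmn).1, fun m n hmn => ?_⟩
  rcases hmn.eq_or_lt with rfl | hlt
  · exact (hp m).2.2
  · exact (hpp m n hlt).2

namespace IsJamesSystem

variable {θ : ℝ} {f : ℕ → StrongDual 𝕜 E} {x : ℕ → E}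

theorem restrict (h : IsJamesSystem θ f x) (Z : Submodule 𝕜 E) (hx : ∀ n, x n ∈ Z) :
    IsJamesSystem θ (fun n => (f n).comp Z.subtypeL) (fun n => (⟨x n, hx n⟩ : Z)) where
  norm_functional_le n := ContinuousLinearMap.opNorm_le_bound _ zero_le_one fun z =>
    (f n).le_of_opNorm_le (h.norm_functional_le n) z
  norm_vector_le := h.norm_vector_le
  apply_eq_zero := h.apply_eq_zero
  lt_re_apply := h.lt_re_apply

theorem eventually_apply_eq_zero (h : IsJamesSystem θ f x) {z : E}
    (hz : z ∈ Submodule.span 𝕜 (Set.range x)) : ∀ᶠ n in atTop, f n z = 0 := by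
  induction hz using Submodule.span_induction with
  | mem z hz =>
    obtain ⟨m, rfl⟩ := hz
    filter_upwards [eventually_gt_atTop m] with n hn using h.apply_eq_zero hn
  | zero => simp
  | add a b _ _ ha hb =>
    filter_upwards [ha, hb] with n han hbn
    rw [map_add, han, hbn, add_zero]
  | smul c a _ ha =>
    filter_upwards [ha] with n han
    rw [map_smul, han, smul_zero]

theorem tendsto_apply_zero (h : IsJamesSystem θ f x) {z : E}
    (hz : z ∈ (Submodule.span 𝕜 (Set.range x)).topologicalClosure) :
    Tendsto (fun n => f n z) atTop (𝓝 0) := by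
  have hequi : Equicontinuous fun n => (f n : E → 𝕜) :=
    (LipschitzWith.uniformEquicontinuous _ 1 fun n =>
      (f n).lipschitzWith_of_opNorm_le (h.norm_functional_le n)).equicontinuous
  refine closure_minimal (fun w hw => ?_)
    (hequi.isClosed_setOfPred_tendsto (l := atTop) (continuous_const (y := (0 : 𝕜)))) hz
  exact tendsto_const_nhds.congr' ((h.eventually_apply_eq_zero hw).mono fun n hn => hn.symm)

theorem le_norm_of_mem_convexHull (h : IsJamesSystem θ f x) {g : StrongDual 𝕜 E}
    (hg : g ∈ convexHull ℝ (Set.range f)) : θ ≤ ‖g‖ := by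
  have hsub : convexHull ℝ (Set.range f) ⊆ {g | ∀ᶠ n in atTop, θ ≤ RCLike.re (g (x n))} := by
    refine convexHull_min ?_ fun g₁ hg₁ g₂ hg₂ a b ha hb hab => ?_
    · rintro _ ⟨m, rfl⟩
      filter_upwards [eventually_ge_atTop m] with n hn using (h.lt_re_apply hn).le
    · filter_upwards [hg₁, hg₂] with n h₁ h₂
      simpa [RCLike.smul_re] using convex_Ici θ h₁ h₂ ha hb hab
  obtain ⟨n, hn⟩ := (hsub hg).exists
  calc θ ≤ ‖g (x n)‖ := hn.trans (RCLike.re_le_norm _)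
    _ ≤ ‖g‖ := g.unit_le_opNorm _ (h.norm_vector_le n)

end IsJamesSystem

end JamesSystem

section GreedySeries

variable {V : Type*} [NormedAddCommGroup V] [NormedSpace ℝ V]

open Topology

theorem exists_seq_forall_sum_range {α M : Type*} [AddCommMonoid M] (t : ℕ → α → M)
    {P : ℕ → M → α → Prop} (h : ∀ n S, ∃ a, P n S a) :
    ∃ a : ℕ → α, ∀ n, P n (∑ k ∈ Finset.range n, t k (a k)) (a n) := by
  choose G hG using h
  let S : ℕ → M := fun n => Nat.rec 0 (fun n S => S + t n (G n S)) n
  have hS : ∀ n, S n = ∑ k ∈ Finset.range n, t k (G k (S k)) := by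
    intro n
    induction n with
    | zero => rfl
    | succ n ih => rw [Finset.sum_range_succ, ← ih]
  exact ⟨fun n => G n (S n), fun n => hS n ▸ hG n (S n)⟩

theorem exists_mem_forall_mem_le_add {α : Type*} {s : Set α} (hs : s.Nonempty) {φ : α → ℝ}
    (hφ : BddBelow (φ '' s)) {ε : ℝ} (hε : 0 < ε) : ∃ a ∈ s, ∀ b ∈ s, φ a ≤ φ b + ε := by
  obtain ⟨_, ⟨a, ha, rfl⟩, hlt⟩ :=
    exists_lt_of_csInf_lt (hs.image φ) (lt_add_of_pos_right (sInf (φ '' s)) hε)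
  exact ⟨a, ha, fun b hb => hlt.le.trans (by gcongr; exact csInf_le hφ ⟨b, hb, rfl⟩)⟩

theorem sum_range_geometric_smul_add_mem {C : Set V} (hC : Convex ℝ C) {g : ℕ → V}
    (hg : ∀ k, g k ∈ C) (n : ℕ) {c : V} (hc : c ∈ C) :
    ∑ k ∈ Finset.range n, (1 / 2 : ℝ) ^ (k + 1) • g k + (1 / 2 : ℝ) ^ n • c ∈ C := by
  induction n generalizing c with
  | zero => simpa using hc
  | succ n ih =>
    have hmid : (1 / 2 : ℝ) • g n + (1 / 2 : ℝ) • c ∈ C :=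
      hC (hg n) hc (by norm_num) (by norm_num) (by norm_num)
    convert ih hmid using 1
    rw [Finset.sum_range_succ]
    module

theorem mem_of_hasSum_geometric_smul {C : Set V} (hC : Convex ℝ C) (hclosed : IsClosed C)
    {g : ℕ → V} (hg : ∀ k, g k ∈ C) {v : V}
    (hv : HasSum (fun k => (1 / 2 : ℝ) ^ (k + 1) • g k) v) : v ∈ C := by
  have hpow : Tendsto (fun n => (1 / 2 : ℝ) ^ n) atTop (𝓝 0) :=
    tendsto_pow_atTop_nhds_zero_of_lt_one (by norm_num) (by norm_num)
  have hlim : Tendsto (fun n => ∑ k ∈ Finset.range n, (1 / 2 : ℝ) ^ (k + 1) • g k +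
      (1 / 2 : ℝ) ^ n • g 0) atTop (𝓝 v) := by
    simpa using hv.tendsto_sum_nat.add (hpow.smul_const (g 0))
  exact hclosed.mem_of_tendsto hlim
    (Eventually.of_forall fun n => sum_range_geometric_smul_add_mem hC hg n (hg 0))

theorem exists_mem_eq_sum_range_add_of_hasSum_geometric_smul {C : Set V} (hC : Convex ℝ C)
    (hclosed : IsClosed C) {g : ℕ → V} {n : ℕ} (hg : ∀ k, n ≤ k → g k ∈ C) {v : V}
    (hv : HasSum (fun k => (1 / 2 : ℝ) ^ (k + 1) • g k) v) :
    ∃ c ∈ C, v = ∑ k ∈ Finset.range n, (1 / 2 : ℝ) ^ (k + 1) • g k + (1 / 2 : ℝ) ^ n • c := by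
  set S := ∑ k ∈ Finset.range n, (1 / 2 : ℝ) ^ (k + 1) • g k
  have htail : HasSum (fun k => (1 / 2 : ℝ) ^ (k + 1) • g (k + n)) ((2 : ℝ) ^ n • (v - S)) := by
    convert ((hasSum_nat_add_iff' n).2 hv).const_smul ((2 : ℝ) ^ n) using 2 with k
    rw [smul_smul, add_right_comm, pow_add _ _ n, mul_left_comm, ← mul_pow]
    norm_num
  refine ⟨_, mem_of_hasSum_geometric_smul hC hclosed (fun k => hg _ le_add_self) htail, ?_⟩
  rw [smul_smul, ← mul_pow]
  norm_num

-- The gap is the solution of `a (t / 2) = (a t - θ / 4 * t ^ 2) / 2`, `a 1 = θ`, at `t = 2⁻ⁿ`.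
theorem add_norm_sum_range_le_norm {g : ℕ → V} {v : V} {θ : ℝ} (hθ : θ ≤ ‖v‖)
    (hg : ∀ n, ‖∑ k ∈ Finset.range n, (1 / 2 : ℝ) ^ (k + 1) • g k + (1 / 2 : ℝ) ^ n • g n‖ ≤
      ‖v‖ + θ / 4 * ((1 / 2) ^ n) ^ 2) (n : ℕ) :
    θ / 2 * (1 / 2) ^ n * (1 + (1 / 2) ^ n) +
      ‖∑ k ∈ Finset.range n, (1 / 2 : ℝ) ^ (k + 1) • g k‖ ≤ ‖v‖ := by
  induction n with
  | zero => norm_num; linarith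
  | succ n ih =>
    set S := ∑ k ∈ Finset.range n, (1 / 2 : ℝ) ^ (k + 1) • g k with hS
    have hmid : S + (1 / 2 : ℝ) ^ (n + 1) • g n =
        (1 / 2 : ℝ) • S + (1 / 2 : ℝ) • (S + (1 / 2 : ℝ) ^ n • g n) := by
      module
    have hnorm : ‖S + (1 / 2 : ℝ) ^ (n + 1) • g n‖ ≤
        1 / 2 * ‖S‖ + 1 / 2 * ‖S + (1 / 2 : ℝ) ^ n • g n‖ := by
      rw [hmid]
      refine (norm_add_le _ _).trans_eq ?_
      rw [norm_smul, norm_smul, Real.norm_of_nonneg (by norm_num)]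
    rw [Finset.sum_range_succ, ← hS]
    linear_combination hnorm + 1 / 2 * ih + 1 / 2 * hg n

theorem exists_forall_exists_mem_add_norm_sub_le [CompleteSpace V] {C : ℕ → Set V}
    (hconv : ∀ n, Convex ℝ (C n)) (hclosed : ∀ n, IsClosed (C n)) (hne : ∀ n, (C n).Nonempty)
    (hanti : Antitone C) (hbdd : Bornology.IsBounded (C 0)) {θ : ℝ} (hθ : 0 < θ)
    (hC : ∀ c ∈ C 0, θ ≤ ‖c‖) :
    ∃ v, ∀ n, ∃ c ∈ C n, θ / 2 * (1 / 2) ^ n + ‖v - (1 / 2 : ℝ) ^ n • c‖ ≤ ‖v‖ := by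
  obtain ⟨g, hg⟩ := exists_seq_forall_sum_range (fun k (c : V) => (1 / 2 : ℝ) ^ (k + 1) • c)
    fun n S => exists_mem_forall_mem_le_add (hne n) (φ := fun c => ‖S + (1 / 2 : ℝ) ^ n • c‖)
      ⟨0, by rintro _ ⟨c, -, rfl⟩; exact norm_nonneg _⟩
      (by positivity : 0 < θ / 4 * ((1 / 2) ^ n) ^ 2)
  obtain ⟨R, hR⟩ := hbdd.exists_norm_le
  have hsummable : Summable fun k => (1 / 2 : ℝ) ^ (k + 1) • g k := by
    refine .of_norm_bounded (g := fun k => (1 / 2 : ℝ) ^ (k + 1) * R)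
      (((summable_nat_add_iff 1).2 summable_geometric_two).mul_right R) fun k => ?_
    rw [norm_smul, Real.norm_of_nonneg (by positivity)]
    gcongr
    exact hR _ (hanti k.zero_le (hg k).1)
  obtain ⟨v, hv⟩ := hsummable
  have hsplit : ∀ n, ∃ c ∈ C n,
      v = ∑ k ∈ Finset.range n, (1 / 2 : ℝ) ^ (k + 1) • g k + (1 / 2 : ℝ) ^ n • c := fun n =>
    exists_mem_eq_sum_range_add_of_hasSum_geometric_smul (hconv n) (hclosed n)
      (fun k hk => hanti hk (hg k).1) hv
  have hθv : θ ≤ ‖v‖ := by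
    obtain ⟨c, hc, hvc⟩ := hsplit 0
    simpa [hvc] using hC c hc
  refine ⟨v, fun n => ?_⟩
  obtain ⟨c, hc, hvc⟩ := hsplit n
  refine ⟨c, hc, ?_⟩
  have hnorm := add_norm_sum_range_le_norm hθv (fun n => by
    obtain ⟨c, hc, hvc⟩ := hsplit n
    simpa only [← hvc] using (hg n).2 c hc) n
  rw [← eq_sub_of_add_eq hvc.symm]
  have : 0 ≤ θ / 2 * (1 / 2) ^ n * (1 / 2) ^ n := by positivity
  linarith

end GreedySeries

section James

variable {𝕜 E : Type*} [RCLike 𝕜] [NormedAddCommGroup E] [NormedSpace 𝕜 E]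

open NormedSpace Topology

theorem exists_forall_norm_apply_lt_norm_of_tendsto_zero {f : ℕ → StrongDual 𝕜 E}
    (hbdd : Bornology.IsBounded (Set.range f)) (hlim : ∀ z, Tendsto (fun n => f n z) atTop (𝓝 0))
    {θ : ℝ} (hθ : 0 < θ) (hf : ∀ g ∈ convexHull ℝ (Set.range f), θ ≤ ‖g‖) :
    ∃ h : StrongDual 𝕜 E, ∀ z, ‖z‖ ≤ 1 → ‖h z‖ < ‖h‖ := by
  let C : ℕ → Set (StrongDual 𝕜 E) := fun n => closure (convexHull ℝ (f '' Set.Ici n))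
  have hC_anti : Antitone C := fun m n hmn =>
    closure_mono (convexHull_mono (Set.image_mono (Set.Ici_subset_Ici.2 hmn)))
  have hC_norm : ∀ c ∈ C 0, θ ≤ ‖c‖ := fun c hc =>
    closure_minimal (fun g hg => hf g (convexHull_mono (Set.image_subset_range f _) hg))
      (isClosed_le continuous_const continuous_norm) hc
  obtain ⟨h, hh⟩ := exists_forall_exists_mem_add_norm_sub_le (C := C)
    (fun n => (convex_convexHull ℝ _).closure) (fun n => isClosed_closure)
    (fun n => (Set.nonempty_Ici.image f).convexHull.closure) hC_anti
    (isBounded_convexHull.2 (hbdd.subset (Set.image_subset_range f _))).closure hθ hC_norm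
  refine ⟨h, fun z hz => ?_⟩
  obtain ⟨n, hn⟩ := eventually_atTop.1 ((hlim z).norm.eventually_le_const (u := θ / 4)
    (by simpa using (by positivity : 0 < θ / 4)))
  obtain ⟨c, hc, hhc⟩ := hh n
  have hcz : ‖c z‖ ≤ θ / 4 := by
    refine closure_minimal (convexHull_min ?_ fun c₁ h₁ c₂ h₂ a b ha hb hab => ?_)
      (isClosed_le ((ContinuousLinearMap.apply 𝕜 𝕜 z).continuous.norm) continuous_const) hc
    · rintro _ ⟨m, hm, rfl⟩
      exact hn m hm
    · simpa using convex_closedBall (0 : 𝕜) (θ / 4) (mem_closedBall_zero_iff.2 h₁)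
        (mem_closedBall_zero_iff.2 h₂) ha hb hab
  have hτ : (0 : ℝ) < (1 / 2) ^ n := by positivity
  calc ‖h z‖ = ‖(h - (1 / 2 : ℝ) ^ n • c) z + (1 / 2 : ℝ) ^ n • c z‖ := by simp
    _ ≤ ‖h - (1 / 2 : ℝ) ^ n • c‖ + (1 / 2) ^ n * (θ / 4) := by
      refine (norm_add_le _ _).trans (add_le_add (ContinuousLinearMap.unit_le_opNorm _ _ hz) ?_)
      rw [norm_smul, Real.norm_of_nonneg hτ.le]
      gcongr
    _ < ‖h‖ := by nlinarith

theorem exists_isClosed_forall_norm_apply_lt_norm [CompleteSpace E]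
    (hE : ¬ Function.Surjective (inclusionInDoubleDual 𝕜 E)) :
    ∃ Z : Submodule 𝕜 E, IsClosed (Z : Set E) ∧
      ∃ h : StrongDual 𝕜 Z, ∀ z, ‖z‖ ≤ 1 → ‖h z‖ < ‖h‖ := by
  obtain ⟨f, x, hfx⟩ := exists_isJamesSystem hE (θ := 1 / 2) (by norm_num) (by norm_num)
  let Z := (Submodule.span 𝕜 (Set.range x)).topologicalClosure
  have hxZ : ∀ n, x n ∈ Z := fun n =>
    Submodule.le_topologicalClosure _ (Submodule.subset_span ⟨n, rfl⟩)
  have hZ := hfx.restrict Z hxZ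
  exact ⟨Z, Submodule.isClosed_topologicalClosure _,
    exists_forall_norm_apply_lt_norm_of_tendsto_zero
      (isBounded_iff_forall_norm_le.2 ⟨1, Set.forall_mem_range.2 hZ.norm_functional_le⟩)
      (fun z => hfx.tendsto_apply_zero z.2) (by norm_num : (0 : ℝ) < 1 / 2)
      fun g hg => hZ.le_norm_of_mem_convexHull hg⟩

theorem surjective_inclusionInDoubleDual_of_forall_isProximinal [CompleteSpace E]
    (hE : ∀ Y : Submodule 𝕜 E, IsClosed (Y : Set E) → IsProximinal (Y : Set E)) :
    Function.Surjective (inclusionInDoubleDual 𝕜 E) := by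
  by_contra hns
  obtain ⟨Z, hZ, h, hlt⟩ := exists_isClosed_forall_norm_apply_lt_norm hns
  have hker : IsClosed (h.ker.map Z.subtype : Set E) :=
    hZ.isClosedEmbedding_subtypeVal.isClosedMap _ h.isClosed_ker
  obtain ⟨z, hz, hhz⟩ :=
    (IsProximinal.of_isometry_image isometry_subtype_coe (hE _ hker)).exists_norm_apply_eq_norm
  exact (hlt z hz).ne hhz

theorem stmt_7_general (𝕜 X : Type*) [RCLike 𝕜] [NormedAddCommGroup X] [NormedSpace 𝕜 X]
    [CompleteSpace X] :
    Function.Surjective (NormedSpace.inclusionInDoubleDual 𝕜 X) ↔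
      ∀ Y : Submodule 𝕜 X, IsClosed (Y : Set X) →
        ∀ x : X, ∃ y₀ ∈ Y, ‖x - y₀‖ = infDist x (Y : Set X) := by
  simp only [← dist_eq_norm]
  exact ⟨fun h _ hY => isProximinal_of_surjective_inclusionInDoubleDual h hY,
    surjective_inclusionInDoubleDual_of_forall_isProximinal⟩

end James

/-- A Banach space is reflexive if and only if it has property (E): every point admits a
best approximation from every closed subspace. -/
theorem stmt_7 (X : Type*) [NormedAddCommGroup X] [NormedSpace ℝ X] [CompleteSpace X] :
    Function.Surjective (NormedSpace.inclusionInDoubleDual ℝ X) ↔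
      ∀ Y : Submodule ℝ X, IsClosed (Y : Set X) →
        ∀ x : X, ∃ y₀ ∈ Y, ‖x - y₀‖ = infDist x (Y : Set X) :=
  stmt_7_general ℝ X
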